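/- Let R and S be minimal separators of a finite simple graph G. Then R crosses S if and only if S crosses R. -/

import Mathlib

/-- A tree-decomposition of a graph `G` indexed by nodes of type `ι`. -/
structure TreeDecomp {V : Type} (G : SimpleGraph V) (ι : Type) where
  tree : SimpleGraph ι
  isTree : tree.IsTree
  bag : ι → Finset V
  bags_cover : ∀ v : V, ∃ i : ι, v ∈ bag i
  edges_covered : ∀ ⦃u v : V⦄, G.Adj u v → ∃ i : ι, u ∈ bag i ∧ v ∈ bag i
  bags_connected : ∀ v : V, (tree.induce {i : ι | v ∈ bag i}).Connected

/-- The treewidth of `G`: the smallest `k` such that `G` has a tree-decomposition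
all of whose bags have at most `k + 1` vertices (i.e. of width at most `k`). -/
noncomputable def treewidth {V : Type} (G : SimpleGraph V) : ℕ :=
  sInf { k : ℕ | ∃ (ι : Type) (td : TreeDecomp G ι), ∀ i : ι, (td.bag i).card ≤ k + 1 }

/-- The neighborhood `N_G(C)` of a vertex set `C`. -/
def nbhd {V : Type} (G : SimpleGraph V) (C : Set V) : Set V :=
  {v : V | v ∉ C ∧ ∃ u ∈ C, G.Adj u v}

/-- `S` separates `a` from `b` in `G`: `a, b ∉ S` and every walk from `a` to `b` meets `S`
(so `a` and `b` lie in distinct components of `G` minus `S`). -/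
def Separates {V : Type} (G : SimpleGraph V) (S : Set V) (a b : V) : Prop :=
  a ∉ S ∧ b ∉ S ∧ ∀ p : G.Walk a b, ∃ v ∈ p.support, v ∈ S

/-- `C` is a connected component of `G` minus `S`. -/
def IsCompOf {V : Type} (G : SimpleGraph V) (S : Set V) (C : Set V) : Prop :=
  C.Nonempty ∧ Disjoint C S ∧ (G.induce C).Connected ∧
    ∀ D : Set V, C ⊆ D → Disjoint D S → (G.induce D).Connected → D = C

/-- `S` is a separator of `G`: `G` minus `S` has more than one connected component. -/
def IsSeparator {V : Type} (G : SimpleGraph V) (S : Set V) : Prop :=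
  ∃ C D : Set V, IsCompOf G S C ∧ IsCompOf G S D ∧ C ≠ D

/-- `C` is a full component of `S` in `G`. -/
def IsFullCompOf {V : Type} (G : SimpleGraph V) (S : Set V) (C : Set V) : Prop :=
  IsCompOf G S C ∧ nbhd G C = S

/-- `S` is a minimal separator of `G`: it has at least two full components. -/
def IsMinSep {V : Type} (G : SimpleGraph V) (S : Set V) : Prop :=
  ∃ C D : Set V, IsFullCompOf G S C ∧ IsFullCompOf G S D ∧ C ≠ D

/-- `R` crosses `S` if `R` separates some pair of vertices of `S`. -/
def Crosses {V : Type} (G : SimpleGraph V) (R S : Set V) : Prop :=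
  ∃ a b : V, a ∈ S ∧ b ∈ S ∧ Separates G R a b

/-- `G` is chordal: every cycle with more than 3 vertices has a chord. -/
def IsChordal {V : Type} (G : SimpleGraph V) : Prop :=
  ∀ ⦃v : V⦄ (c : G.Walk v v), c.IsCycle → 3 < c.length →
    ∃ u w : V, u ∈ c.support ∧ w ∈ c.support ∧ G.Adj u w ∧ s(u, w) ∉ c.edges

/-- `H` is a triangulation of `G`. -/
def IsTriangulationOf {V : Type} (H G : SimpleGraph V) : Prop :=
  IsChordal H ∧ G ≤ H

/-- `H` is a minimal triangulation of `G`. -/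
def IsMinimalTriangulationOf {V : Type} (H G : SimpleGraph V) : Prop :=
  IsTriangulationOf H G ∧ ∀ H' : SimpleGraph V, IsTriangulationOf H' G → H' ≤ H → H' = H

/-- `K(S)`: the graph on the same vertex type whose edges join all pairs of
distinct vertices of `S`. -/
def completeOn {V : Type} (S : Set V) : SimpleGraph V :=
  SimpleGraph.fromRel (fun a b => a ∈ S ∧ b ∈ S)

/-- `s` is a maximal clique of `G`. -/
def IsMaximalClique {V : Type} (G : SimpleGraph V) (s : Set V) : Prop :=
  G.IsClique s ∧ ∀ t : Set V, G.IsClique t → s ⊆ t → s = t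

/-- `fill G td`: fill every bag of the tree-decomposition `td` into a clique. -/
def fill {V ι : Type} (G : SimpleGraph V) (td : TreeDecomp G ι) : SimpleGraph V :=
  G ⊔ SimpleGraph.fromRel (fun a b => ∃ i : ι, a ∈ td.bag i ∧ b ∈ td.bag i)

/-- The nodes of the maximal subtree `T(i,j)` of the tree containing `i` but not `j`
(for adjacent `i`, `j`): the nodes reachable from `i` after deleting the edge `{i, j}`. -/
def sideNodes {V ι : Type} {G : SimpleGraph V} (td : TreeDecomp G ι) (i j : ι) : Set ι :=
  {t : ι | (td.tree.deleteEdges {s(i, j)}).Reachable i t}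

/-- `V(i,j)`: the union of the bags of nodes in `T(i,j)`, with the vertices of the
bag of `j` removed. -/
def sideVerts {V ι : Type} {G : SimpleGraph V} (td : TreeDecomp G ι) (i j : ι) : Set V :=
  (⋃ t ∈ sideNodes td i j, (td.bag t : Set V)) \ (td.bag j : Set V)

/-- A perfect elimination order of `G`. -/
def IsPerfectElimOrder {V : Type} [Fintype V] (G : SimpleGraph V)
    (e : Fin (Fintype.card V) ≃ V) : Prop :=
  ∀ i : Fin (Fintype.card V),
    G.IsClique {u : V | G.Adj (e i) u ∧ ∃ j : Fin (Fintype.card V), i < j ∧ e j = u}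

/-- `H` is a minor of `G`, via the branch-set (minor model) characterization. -/
def IsMinorOf {W V : Type} (H : SimpleGraph W) (G : SimpleGraph V) : Prop :=
  ∃ B : W → Set V,
    (∀ w : W, (B w).Nonempty) ∧
    (∀ w : W, (G.induce (B w)).Connected) ∧
    (Pairwise fun w₁ w₂ : W => Disjoint (B w₁) (B w₂)) ∧
    ∀ ⦃w₁ w₂ : W⦄, H.Adj w₁ w₂ → ∃ a ∈ B w₁, ∃ b ∈ B w₂, G.Adj a b

/-- There is a clique minor of `G` minus `C` rooted on `R`, given by branch sets
`B v ∋ v` for `v ∈ R`: disjoint from `C`, pairwise disjoint, each connected, with an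
edge of `G` between every two of them. -/
def HasCliqueMinorRootedAvoiding {V : Type} (G : SimpleGraph V) (R C : Set V) : Prop :=
  ∃ B : R → Set V,
    (∀ v : R, (v : V) ∈ B v) ∧
    (∀ v : R, Disjoint (B v) C) ∧
    (∀ v : R, (G.induce (B v)).Connected) ∧
    (∀ u v : R, u ≠ v → Disjoint (B u) (B v)) ∧
    (∀ u v : R, u ≠ v → ∃ a ∈ B u, ∃ b ∈ B v, G.Adj a b)

/-- `S` is a minor-safe separator of `G`: for every component `C` of `G` minus `S`,
there is a clique minor of `G` minus `C` rooted on `N_G(C)`. -/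
def MinorSafe {V : Type} (G : SimpleGraph V) (S : Set V) : Prop :=
  ∀ C : Set V, IsCompOf G S C → HasCliqueMinorRootedAvoiding G (nbhd G C) C

/-- A walk leaving a component of `G` minus `S` meets `S`. -/
theorem IsCompOf.exists_mem_support {V : Type} {G : SimpleGraph V} {S C : Set V}
    (hC : IsCompOf G S C) {x y : V} (p : G.Walk x y) (hx : x ∈ C) (hy : y ∉ C) :
    ∃ v ∈ p.support, v ∈ S := by
  induction p with
  | nil => exact absurd hx hy
  | @cons x z y hxz p ih =>
    by_cases hz : z ∈ C
    · obtain ⟨v, hv, hvS⟩ := ih hz hy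
      exact ⟨v, by simp [hv], hvS⟩
    · refine ⟨z, by simp, ?_⟩
      by_contra hzS
      have hxS : x ∉ S := Set.disjoint_left.1 hC.2.1 hx
      have hD : C ∪ {x, z} = C := by
        refine hC.2.2.2 _ Set.subset_union_left ?_ ?_
        · rw [Set.disjoint_union_left]
          refine ⟨hC.2.1, ?_⟩
          simp [hxS, hzS]
        · exact SimpleGraph.induce_union_connected hC.2.2.1.preconnected
            (SimpleGraph.induce_pair_connected_of_adj hxz).preconnected ⟨x, hx, by simp⟩
      exact hz (hD ▸ by simp)

/-- Distinct components of `G` minus `S` are disjoint. -/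
theorem IsCompOf.disjoint {V : Type} {G : SimpleGraph V} {S C D : Set V}
    (hC : IsCompOf G S C) (hD : IsCompOf G S D) (hne : C ≠ D) : Disjoint C D := by
  by_contra h
  have hconn : (G.induce (C ∪ D)).Connected :=
    SimpleGraph.induce_union_connected hC.2.2.1.preconnected hD.2.2.1.preconnected
      (Set.not_disjoint_iff_nonempty_inter.1 h)
  have hdisj : Disjoint (C ∪ D) S := Set.disjoint_union_left.2 ⟨hC.2.1, hD.2.1⟩
  exact hne ((hC.2.2.2 _ Set.subset_union_left hdisj hconn).symm.trans
    (hD.2.2.2 _ Set.subset_union_right hdisj hconn))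

/-- A set separating two vertices of `S` meets every full component of `S`. -/
theorem IsFullCompOf.exists_mem_of_separates {V : Type} {G : SimpleGraph V} {R S C : Set V}
    (hC : IsFullCompOf G S C) {a b : V} (ha : a ∈ S) (hb : b ∈ S) (h : Separates G R a b) :
    ∃ r ∈ C, r ∈ R := by
  obtain ⟨haR, hbR, hsep⟩ := h
  rw [← hC.2] at ha hb
  obtain ⟨-, u, hu, hua⟩ := ha
  obtain ⟨-, w, hw, hwb⟩ := hb
  obtain ⟨p⟩ := hC.1.2.2.1.preconnected ⟨u, hu⟩ ⟨w, hw⟩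
  obtain ⟨q, hq⟩ : ∃ q : G.Walk u w, ∀ v ∈ q.support, v ∈ C := by
    refine ⟨p.map (SimpleGraph.Embedding.induce C).toHom, fun v hv => ?_⟩
    obtain ⟨x, -, rfl⟩ := List.mem_map.1 (SimpleGraph.Walk.support_map _ p ▸ hv)
    exact x.2
  obtain ⟨v, hv, hvR⟩ := hsep (.cons hua.symm (q.concat hwb))
  simp only [SimpleGraph.Walk.support_cons, SimpleGraph.Walk.support_concat,
    List.mem_cons, List.mem_append, List.not_mem_nil, or_false] at hv
  rcases hv with rfl | hv | rfl
  · exact absurd hvR haR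
  · exact ⟨v, hq v hv, hvR⟩
  · exact absurd hvR hbR

/-- If a set `R` separates two vertices of a minimal separator `S`, then `S` crosses `R`. -/
theorem IsMinSep.crosses_of_crosses {V : Type} {G : SimpleGraph V} {R S : Set V}
    (hS : IsMinSep G S) (h : Crosses G R S) : Crosses G S R := by
  obtain ⟨C, D, hC, hD, hne⟩ := hS
  obtain ⟨a, b, ha, hb, hsep⟩ := h
  obtain ⟨r, hrC, hrR⟩ := hC.exists_mem_of_separates ha hb hsep
  obtain ⟨t, htD, htR⟩ := hD.exists_mem_of_separates ha hb hsep
  exact ⟨r, t, hrR, htR, Set.disjoint_left.1 hC.1.2.1 hrC, Set.disjoint_left.1 hD.1.2.1 htD,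
    fun p => hC.1.exists_mem_support p hrC
      (Set.disjoint_right.1 (hC.1.disjoint hD.1 hne) htD)⟩

/-- for minimal separators `R` and `S`, `R` crosses `S` iff `S`
crosses `R`. -/
theorem crosses_comm_of_minSep {V : Type} [Fintype V] (G : SimpleGraph V)
    (R S : Set V) (hR : IsMinSep G R) (hS : IsMinSep G S) :
    Crosses G R S ↔ Crosses G S R := by
  exact ⟨hS.crosses_of_crosses, hR.crosses_of_crosses⟩
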